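/- Let H ∈ (0,1) and let n be an integer with n ≥ 2^{1/H}. Then, with c₂ := (2π·ln 2)^{−1/2}, one has f(H,n) ≥ c₂/((6+c₂)·5·√H) − 0.0107. -/

import Mathlib

open MeasureTheory ProbabilityTheory Real Set Filter Topology

noncomputable section

/-- `X` is a centered Gaussian process on the time set `S`: every finite linear
combination `∑ i, c i * X (ts i)` of its values at times in `S` is a centered
Gaussian random variable. -/
def IsCenteredGaussianOn {Ω : Type} [MeasurableSpace Ω] (μ : Measure Ω)
    (X : ℝ → Ω → ℝ) (S : Set ℝ) : Prop :=
  (∀ t ∈ S, Measurable (X t)) ∧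
  ∀ (k : ℕ) (c : Fin k → ℝ) (ts : Fin k → ℝ), (∀ i, ts i ∈ S) →
    ∃ v : NNReal, μ.map (fun ω => ∑ i, c i * X (ts i) ω) = gaussianReal 0 v

/-- The `L²`-norm `‖Y‖₂ = (E Y²)^{1/2}` of a real random variable. -/
def l2norm {Ω : Type} [MeasurableSpace Ω] (μ : Measure Ω) (Y : Ω → ℝ) : ℝ :=
  Real.sqrt (∫ ω, (Y ω) ^ 2 ∂μ)

/-- The expected supremum `E [sup_{0 ≤ t ≤ 1} X_t]`. -/
def expMax {Ω : Type} [MeasurableSpace Ω] (μ : Measure Ω) (X : ℝ → Ω → ℝ) : ℝ :=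
  ∫ ω, (⨆ t : Icc (0:ℝ) 1, X t.1 ω) ∂μ

/-- The expected maximum over the grid: `E [max_{0 ≤ i ≤ n} X_{i/n}]`. -/
def expMaxGrid {Ω : Type} [MeasurableSpace Ω] (μ : Measure Ω) (X : ℝ → Ω → ℝ) (n : ℕ) : ℝ :=
  ∫ ω, (⨆ i : Fin (n + 1), X (((i : ℕ) : ℝ) / (n : ℝ)) ω) ∂μ

/-- `B` is a fractional Brownian motion with Hurst parameter `H`: a centered Gaussian
process on `[0,∞)` with a.s. continuous sample paths, `B 0 = 0`, and covariance
`E[B_s B_t] = (s^{2H} + t^{2H} - |t-s|^{2H}) / 2`. -/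
def IsFBM {Ω : Type} [MeasurableSpace Ω] (μ : Measure Ω) (H : ℝ) (B : ℝ → Ω → ℝ) : Prop :=
  IsCenteredGaussianOn μ B (Ici 0) ∧
  (∀ᵐ ω ∂μ, ContinuousOn (fun t => B t ω) (Ici 0)) ∧
  (∀ᵐ ω ∂μ, B 0 ω = 0) ∧
  ∀ s t : ℝ, 0 ≤ s → 0 ≤ t →
    ∫ ω, B s ω * B t ω ∂μ = (s ^ (2 * H) + t ^ (2 * H) - |t - s| ^ (2 * H)) / 2

/-!
For centered Gaussian `X₁, …, Xₘ` with softmax weights `pᵢ ∝ exp Xᵢ`, Gaussian integration by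
parts gives `E ∑ pᵢ Xᵢ = ½ E ∑ pᵢ pⱼ Var(Xᵢ - Xⱼ)`. The left side is at most `E max Xᵢ`. If all
`Var(Xᵢ - Xⱼ) ≥ d` for `i ≠ j`, the right side is at least `½ d E (1 - ∑ pᵢ²)`, and
`∑ pᵢ² ≤ max pᵢ = exp (max Xᵢ - log ∑ exp Xⱼ)` can only be close to `1` when `max Xᵢ` is of order
`log m`. Applied to `β X` with a well-chosen scaling `β`, this is Sudakov's minoration with constant
`1/4`. For a fractional Brownian motion the points of the grid at mutual distance at least
`2 ^ (-1 / (2 * H))`, up to rounding, number about `2 ^ (1 / (2 * H))` and are separated by at least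
`1/2` in `L²`, which gives the lower bound `√(log 2 / (2 * H)) / 8`.
-/

section SteinLemma

lemma hasDerivAt_gaussianPDFReal (m : ℝ) (v : NNReal) (x : ℝ) :
    HasDerivAt (gaussianPDFReal m v) (-((x - m) / v) * gaussianPDFReal m v x) x := by
  have hexponent : HasDerivAt (fun x : ℝ ↦ -(x - m) ^ 2 / (2 * v)) (-((x - m) / v)) x := by
    refine ((((hasDerivAt_id x).sub_const m).pow 2).neg.div_const (2 * (v : ℝ))).congr_deriv ?_
    simp only [id_eq]
    ring
  exact (hexponent.exp.const_mul (√(2 * π * v))⁻¹).congr_deriv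
    (by rw [gaussianPDFReal]; ring)

lemma integrable_gaussianReal_iff {m : ℝ} {v : NNReal} (hv : v ≠ 0) {f : ℝ → ℝ} :
    Integrable f (gaussianReal m v) ↔ Integrable (fun x ↦ gaussianPDFReal m v x * f x) := by
  rw [gaussianReal_of_var_ne_zero m hv, integrable_withDensity_iff_integrable_smul'
    (measurable_gaussianPDF m v) (ae_of_all _ fun _ ↦ gaussianPDF_lt_top)]
  simp only [toReal_gaussianPDF, smul_eq_mul]

lemma integral_sub_mul_gaussianReal {m : ℝ} {v : NNReal} {g g' : ℝ → ℝ}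
    (hderiv : ∀ x, HasDerivAt g (g' x) x)
    (hmul : Integrable (fun x ↦ (x - m) * g x) (gaussianReal m v))
    (hg : Integrable g (gaussianReal m v)) (hg' : Integrable g' (gaussianReal m v)) :
    ∫ x, (x - m) * g x ∂gaussianReal m v = v * ∫ x, g' x ∂gaussianReal m v := by
  rcases eq_or_ne v 0 with rfl | hv
  · simp
  rw [integrable_gaussianReal_iff hv] at hmul hg hg'
  let φ := gaussianPDFReal m v
  have hscore (x : ℝ) : g x * (-((x - m) / v) * φ x) = -(v : ℝ)⁻¹ * (φ x * ((x - m) * g x)) := by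
    ring
  have hparts : ∫ x, g x * (-((x - m) / v) * φ x) = -∫ x, g' x * φ x :=
    integral_mul_deriv_eq_deriv_mul_of_integrable
      (fun x _ ↦ hderiv x) (fun x _ ↦ hasDerivAt_gaussianPDFReal m v x)
      ((hmul.const_mul (-(v : ℝ)⁻¹)).congr (ae_of_all _ fun x ↦ (hscore x).symm))
      (hg'.congr (ae_of_all _ fun x ↦ mul_comm _ _))
      (hg.congr (ae_of_all _ fun x ↦ mul_comm _ _))
  simp_rw [hscore, integral_const_mul, mul_comm (g' _)] at hparts
  simp only [integral_gaussianReal_eq_integral_smul hv, smul_eq_mul]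
  change ∫ x, φ x * ((x - m) * g x) = v * ∫ x, φ x * g' x
  rw [← neg_eq_iff_eq_neg.2 hparts, neg_mul, neg_neg,
    mul_inv_cancel_left₀ (NNReal.coe_ne_zero.2 hv)]

variable {Ω : Type*} [MeasurableSpace Ω] {μ : Measure Ω}

lemma integral_sub_mul_of_indepFun {E : Type*} [MeasurableSpace E] {Y : Ω → ℝ} {W : Ω → E}
    (hY : HasGaussianLaw Y μ) (hW : AEMeasurable W μ) (hYW : IndepFun Y W μ) {g g' : ℝ × E → ℝ}
    (hderiv : ∀ y w, HasDerivAt (fun t ↦ g (t, w)) (g' (y, w)) y)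
    (hgm : Measurable g) (hgm' : Measurable g')
    (hmul : Integrable (fun ω ↦ (Y ω - μ[Y]) * g (Y ω, W ω)) μ)
    (hg : Integrable (fun ω ↦ g (Y ω, W ω)) μ) (hg' : Integrable (fun ω ↦ g' (Y ω, W ω)) μ) :
    ∫ ω, (Y ω - μ[Y]) * g (Y ω, W ω) ∂μ = Var[Y; μ] * ∫ ω, g' (Y ω, W ω) ∂μ := by
  have := hY.isProbabilityMeasure
  have hYW_meas : AEMeasurable (fun ω ↦ (Y ω, W ω)) μ := hY.aemeasurable.prodMk hW
  have := Measure.isProbabilityMeasure_map hW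
  have hlaw : μ.map (fun ω ↦ (Y ω, W ω))
      = (gaussianReal μ[Y] Var[Y; μ].toNNReal).prod (μ.map W) := by
    rw [← hY.map_eq_gaussianReal]
    exact (indepFun_iff_map_prod_eq_prod_map_map hY.aemeasurable hW).1 hYW
  have hintegrable {f : ℝ × E → ℝ} (hf : Measurable f)
      (hfi : Integrable (fun ω ↦ f (Y ω, W ω)) μ) :
      Integrable f ((gaussianReal μ[Y] Var[Y; μ].toNNReal).prod (μ.map W)) := by
    rw [← hlaw]
    exact (integrable_map_measure hf.aestronglyMeasurable hYW_meas).2 hfi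
  have hfubini {f : ℝ × E → ℝ} (hf : Measurable f) (hfi : Integrable (fun ω ↦ f (Y ω, W ω)) μ) :
      ∫ ω, f (Y ω, W ω) ∂μ
        = ∫ w, ∫ y, f (y, w) ∂gaussianReal μ[Y] Var[Y; μ].toNNReal ∂μ.map W := by
    rw [← integral_prod_symm f (hintegrable hf hfi), ← hlaw,
      integral_map hYW_meas hf.aestronglyMeasurable]
  have hmul_meas : Measurable (fun p : ℝ × E ↦ (p.1 - μ[Y]) * g p) :=
    (measurable_fst.sub_const _).mul hgm
  rw [hfubini hmul_meas hmul, hfubini hgm' hg', ← integral_const_mul]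
  refine integral_congr_ae ?_
  filter_upwards [(hintegrable hmul_meas hmul).prod_left_ae, (hintegrable hgm hg).prod_left_ae,
    (hintegrable hgm' hg').prod_left_ae] with w hmul_w hg_w hg'_w
  rw [integral_sub_mul_gaussianReal (fun y ↦ hderiv y w) hmul_w hg_w hg'_w,
    Real.coe_toNNReal _ (variance_nonneg _ _)]

variable {ι : Type*} [Finite ι] {X : ι → Ω → ℝ}

lemma indepFun_sub_mul_regression (hX : HasGaussianLaw (fun ω ↦ (X · ω)) μ) {i : ι}
    (hi : Var[X i; μ] ≠ 0) :
    IndepFun (X i) (fun ω j ↦ X j ω - X i ω * (cov[X i, X j; μ] / Var[X i; μ])) μ := by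
  have := hX.isProbabilityMeasure
  have := Fintype.ofFinite ι
  have hL2 (j : ι) : MemLp (X j) 2 μ := (hX.eval j).memLp_two
  let a (j : ι) : ℝ := cov[X i, X j; μ] / Var[X i; μ]
  let L : (ι → ℝ) →L[ℝ] (Unit → ℝ) × (ι → ℝ) :=
    (ContinuousLinearMap.pi fun _ ↦ .proj i).prod
      (.id ℝ _ - (ContinuousLinearMap.proj i).smulRight a)
  have hjoint : HasGaussianLaw
      (fun ω ↦ (fun _ : Unit ↦ X i ω, fun j ↦ X j ω - X i ω * a j)) μ := hX.map_fun L
  have hcov (j : ι) : cov[X i, fun ω ↦ X j ω - X i ω * a j; μ] = 0 := by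
    rw [covariance_fun_sub_right (hL2 i) (hL2 j) ((hL2 i).mul_const _),
      covariance_mul_const_right, covariance_self (hL2 i).aemeasurable, mul_div_cancel₀ _ hi,
      sub_self]
  have hindep := HasGaussianLaw.indepFun_of_covariance_eval (X := fun _ ↦ X i) hjoint fun _ ↦ hcov
  exact hindep.comp (measurable_pi_apply ()) measurable_id

lemma hasDerivAt_comp_smul_add {𝕜 E F : Type*} [NontriviallyNormedField 𝕜] [AddCommGroup E]
    [Module 𝕜 E] [NormedAddCommGroup F] [NormedSpace 𝕜 F] {f : E → F} {f' : F} {a w : E} {y : 𝕜}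
    (h : HasLineDerivAt 𝕜 f f' (y • a + w) a) : HasDerivAt (fun t ↦ f (t • a + w)) f' y := by
  rw [HasLineDerivAt, ← sub_self y] at h
  refine (h.comp_sub_const y y).congr_of_eventuallyEq (.of_forall fun t ↦ congrArg f ?_)
  module

lemma integral_sub_mul_of_hasLineDerivAt_of_variance_ne_zero
    (hX : HasGaussianLaw (fun ω ↦ (X · ω)) μ) {i : ι} (hi : Var[X i; μ] ≠ 0)
    {G D : (ι → ℝ) → ℝ}
    (hderiv : ∀ y, HasLineDerivAt ℝ G (D y) y fun j ↦ cov[X i, X j; μ])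
    (hGm : Measurable G) (hDm : Measurable D)
    (hmul : Integrable (fun ω ↦ (X i ω - μ[X i]) * G (X · ω)) μ)
    (hG : Integrable (fun ω ↦ G (X · ω)) μ) (hD : Integrable (fun ω ↦ D (X · ω)) μ) :
    ∫ ω, (X i ω - μ[X i]) * G (X · ω) ∂μ = ∫ ω, D (X · ω) ∂μ := by
  let a (j : ι) : ℝ := cov[X i, X j; μ] / Var[X i; μ]
  let W (ω : Ω) (j : ι) : ℝ := X j ω - X i ω * a j
  have hW : AEMeasurable W μ := aemeasurable_pi_iff.2 fun j ↦
    (hX.eval j).aemeasurable.sub ((hX.eval i).aemeasurable.mul_const _)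
  have hdecomp (ω : Ω) : X i ω • a + W ω = (X · ω) := by
    ext j
    simp [W]
  have hline (y : ℝ) (w : ι → ℝ) :
      HasDerivAt (fun t ↦ G (t • a + w)) ((Var[X i; μ])⁻¹ * D (y • a + w)) y := by
    have ha : a = (Var[X i; μ])⁻¹ • fun j ↦ cov[X i, X j; μ] := by
      ext j
      simp [a, div_eq_inv_mul]
    have h := (hderiv (y • a + w)).smul (Var[X i; μ])⁻¹
    rw [← ha] at h
    exact hasDerivAt_comp_smul_add h
  have hshift : Measurable fun p : ℝ × (ι → ℝ) ↦ p.1 • a + p.2 := by fun_prop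
  have hstein := integral_sub_mul_of_indepFun (hX.eval i) hW (indepFun_sub_mul_regression hX hi)
    hline (hGm.comp hshift) ((hDm.comp hshift).const_mul _)
    (by simpa only [hdecomp, Function.comp_apply] using hmul)
    (by simpa only [hdecomp, Function.comp_apply] using hG)
    (by simpa only [hdecomp, Function.comp_apply] using hD.const_mul _)
  simp only [Function.comp_apply, hdecomp, integral_const_mul] at hstein
  rw [hstein, mul_inv_cancel_left₀ hi]

lemma integral_sub_mul_of_hasLineDerivAt (hX : HasGaussianLaw (fun ω ↦ (X · ω)) μ) (i : ι)
    {G D : (ι → ℝ) → ℝ}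
    (hderiv : ∀ y, HasLineDerivAt ℝ G (D y) y fun j ↦ cov[X i, X j; μ])
    (hGm : Measurable G) (hDm : Measurable D)
    (hmul : Integrable (fun ω ↦ (X i ω - μ[X i]) * G (X · ω)) μ)
    (hG : Integrable (fun ω ↦ G (X · ω)) μ) (hD : Integrable (fun ω ↦ D (X · ω)) μ) :
    ∫ ω, (X i ω - μ[X i]) * G (X · ω) ∂μ = ∫ ω, D (X · ω) ∂μ := by
  have := hX.isProbabilityMeasure
  rcases eq_or_ne Var[X i; μ] 0 with hi | hi
  · have hconst : X i =ᵐ[μ] fun _ ↦ μ[X i] :=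
      ae_eq_integral_of_variance_eq_zero (hX.eval i).memLp_two hi
    have hcov (j : ι) : cov[X i, X j; μ] = 0 := by
      refine integral_eq_zero_of_ae (hconst.mono fun ω hω ↦ ?_)
      simp [hω]
    have hD0 (y : ι → ℝ) : D y = 0 := by
      have h := hderiv y
      simp only [hcov, ← Pi.zero_def] at h
      exact h.unique hasLineDerivAt_zero
    simp only [hD0, integral_zero]
    exact integral_eq_zero_of_ae (hconst.mono fun ω h ↦ by simp [h])
  exact integral_sub_mul_of_hasLineDerivAt_of_variance_ne_zero hX hi hderiv hGm hDm hmul hG hD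

end SteinLemma

section Softmax

lemma div_mul_one_sub_exp_neg_le {L a : ℝ} (hL : 0 ≤ L) (hLa : L ≤ a) :
    L / a * (1 - exp (-a)) ≤ 1 - exp (-L) := by
  rcases hL.eq_or_lt with rfl | hL'
  · simp
  have ha : 0 < a := hL'.trans_le hLa
  have hchord := convexOn_exp.2 (mem_univ 0) (mem_univ (-a)) (sub_nonneg.2 ((div_le_one ha).2 hLa))
    (by positivity : 0 ≤ L / a) (sub_add_cancel 1 _)
  have hpoint : L / a * a = L := div_mul_cancel₀ L ha.ne'
  simp only [smul_eq_mul, mul_zero, zero_add, exp_zero, mul_one, mul_neg, hpoint] at hchord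
  linarith

variable {ι : Type*} [Fintype ι]

/-- The log-sum-exp function, a smooth approximation of the maximum of a finite family. -/
def logSumExp (x : ι → ℝ) : ℝ := log (∑ j, exp (x j))

/-- The softmax (Gibbs) weights of a finite family, the gradient of `logSumExp`. -/
def softmax (x : ι → ℝ) (i : ι) : ℝ := exp (x i) / ∑ j, exp (x j)

lemma softmax_nonneg (x : ι → ℝ) (i : ι) : 0 ≤ softmax x i := by
  unfold softmax; positivity

lemma measurable_softmax (i : ι) : Measurable fun x : ι → ℝ ↦ softmax x i := by
  unfold softmax; fun_prop

variable [Nonempty ι]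

lemma sum_exp_pos (x : ι → ℝ) : 0 < ∑ j, exp (x j) :=
  Finset.sum_pos (fun j _ ↦ exp_pos (x j)) Finset.univ_nonempty

lemma exp_logSumExp (x : ι → ℝ) : exp (logSumExp x) = ∑ j, exp (x j) :=
  exp_log (sum_exp_pos x)

lemma sum_softmax (x : ι → ℝ) : ∑ i, softmax x i = 1 := by
  simp only [softmax, ← Finset.sum_div, div_self (sum_exp_pos x).ne']

lemma softmax_le_one (x : ι → ℝ) (i : ι) : softmax x i ≤ 1 :=
  (Finset.single_le_sum (fun j _ ↦ softmax_nonneg x j) (Finset.mem_univ i)).trans_eq (sum_softmax x)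

lemma softmax_eq_exp_sub (x : ι → ℝ) (i : ι) : softmax x i = exp (x i - logSumExp x) := by
  rw [exp_sub, exp_logSumExp, softmax]

lemma ciSup_le_logSumExp (x : ι → ℝ) : ⨆ i, x i ≤ logSumExp x :=
  ciSup_le fun i ↦ (le_log_iff_exp_le (sum_exp_pos x)).2 <|
    Finset.single_le_sum (f := fun j ↦ exp (x j)) (fun j _ ↦ (exp_pos (x j)).le) (Finset.mem_univ i)

lemma logSumExp_le_log_card_add_ciSup (x : ι → ℝ) :
    logSumExp x ≤ log (Fintype.card ι) + ⨆ i, x i := by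
  rw [logSumExp, log_le_iff_le_exp (sum_exp_pos x), exp_add, exp_log (by positivity),
    ← nsmul_eq_mul]
  exact Finset.sum_le_card_nsmul _ _ _ fun i _ ↦
    exp_le_exp.2 (le_ciSup (Finite.bddAbove_range x) i)

lemma log_card_add_average_le_logSumExp (x : ι → ℝ) :
    log (Fintype.card ι) + (∑ i, x i) / Fintype.card ι ≤ logSumExp x := by
  have hcard : (0 : ℝ) < Fintype.card ι := by positivity
  have hjensen :
      exp ((Fintype.card ι : ℝ)⁻¹ * ∑ i, x i) ≤ (Fintype.card ι : ℝ)⁻¹ * ∑ i, exp (x i) := by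
    have h := convexOn_exp.map_sum_le (t := Finset.univ) (w := fun _ ↦ (Fintype.card ι : ℝ)⁻¹)
      (p := x) (fun _ _ ↦ by positivity) (by simp) fun _ _ ↦ mem_univ _
    simpa only [smul_eq_mul, ← Finset.mul_sum] using h
  rw [logSumExp, le_log_iff_exp_le (sum_exp_pos x), exp_add, exp_log hcard, div_eq_inv_mul]
  exact (le_inv_mul_iff₀ hcard).1 hjensen

lemma hasLineDerivAt_softmax (x v : ι → ℝ) (i : ι) :
    HasLineDerivAt ℝ (softmax · i) (∑ j, softmax x i * softmax x j * (v i - v j)) x v := by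
  have hexp (j : ι) : HasDerivAt (fun t : ℝ ↦ exp ((x + t • v) j)) (exp (x j) * v j) 0 := by
    have h : HasDerivAt (fun t : ℝ ↦ x j + t * v j) (v j) 0 := by
      simpa using ((hasDerivAt_id (0 : ℝ)).mul_const (v j)).const_add (x j)
    simpa using h.exp
  have hquot := (hexp i).div (HasDerivAt.fun_sum fun j _ ↦ hexp j)
    (sum_exp_pos (x + (0 : ℝ) • v)).ne'
  refine hquot.congr_deriv ?_
  have hmean : ∑ j, softmax x i * softmax x j * (v i - v j)
      = softmax x i * (v i - ∑ j, softmax x j * v j) := by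
    simp only [mul_sub, Finset.sum_sub_distrib, ← Finset.sum_mul, ← Finset.mul_sum, mul_assoc,
      sum_softmax, one_mul]
  have hS := (sum_exp_pos x).ne'
  rw [hmean]
  simp only [softmax, zero_smul, add_zero, div_mul_eq_mul_div, ← Finset.sum_div]
  field_simp

lemma sum_softmax_sq_le (x : ι → ℝ) :
    ∑ i, softmax x i ^ 2 ≤ exp (-(logSumExp x - ⨆ i, x i)) := by
  calc ∑ i, softmax x i ^ 2 ≤ ∑ i, softmax x i * exp (-(logSumExp x - ⨆ i, x i)) := by
        refine Finset.sum_le_sum fun i _ ↦ ?_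
        rw [sq]
        refine mul_le_mul_of_nonneg_left ?_ (softmax_nonneg x i)
        rw [softmax_eq_exp_sub, neg_sub]
        exact exp_le_exp.2 (sub_le_sub_right (le_ciSup (Finite.bddAbove_range x) i) _)
    _ = exp (-(logSumExp x - ⨆ i, x i)) := by rw [← Finset.sum_mul, sum_softmax, one_mul]

lemma sum_mul_softmax_le_ciSup (x : ι → ℝ) : ∑ i, x i * softmax x i ≤ ⨆ i, x i := by
  calc ∑ i, x i * softmax x i ≤ ∑ i, (⨆ i, x i) * softmax x i :=
        Finset.sum_le_sum fun i _ ↦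
          mul_le_mul_of_nonneg_right (le_ciSup (Finite.bddAbove_range x) i) (softmax_nonneg x i)
    _ = ⨆ i, x i := by rw [← Finset.mul_sum, sum_softmax, mul_one]

end Softmax

lemma le_one_sub_sum_softmax_sq {ι : Type*} [Fintype ι] [Nontrivial ι] (x : ι → ℝ) :
    (log (Fintype.card ι) + (∑ i, x i) / Fintype.card ι - ⨆ i, x i) / (2 * log (Fintype.card ι))
      ≤ 1 - ∑ i, softmax x i ^ 2 := by
  have hcard : (2 : ℝ) ≤ Fintype.card ι := mod_cast Fintype.one_lt_card (α := ι)
  have hlog : 0 < log (Fintype.card ι) := log_pos (by linarith)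
  have hexp : (1 : ℝ) / 2 ≤ 1 - exp (-log (Fintype.card ι)) := by
    rw [exp_neg, exp_log (by linarith)]
    have := inv_anti₀ two_pos hcard
    linarith
  have hgap : 0 ≤ logSumExp x - ⨆ i, x i := sub_nonneg.2 (ciSup_le_logSumExp x)
  calc _ ≤ (logSumExp x - ⨆ i, x i) / (2 * log (Fintype.card ι)) := by
        gcongr
        exact log_card_add_average_le_logSumExp x
    _ = (logSumExp x - ⨆ i, x i) / log (Fintype.card ι) * (1 / 2) := by
        field_simp
    _ ≤ (logSumExp x - ⨆ i, x i) / log (Fintype.card ι) * (1 - exp (-log (Fintype.card ι))) := by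
        gcongr
    _ ≤ 1 - exp (-(logSumExp x - ⨆ i, x i)) :=
        div_mul_one_sub_exp_neg_le hgap (sub_le_iff_le_add.2 (logSumExp_le_log_card_add_ciSup x))
    _ ≤ 1 - ∑ i, softmax x i ^ 2 := sub_le_sub_left (sum_softmax_sq_le x) 1

section Weights

variable {ι : Type*} [Fintype ι]

lemma sum_mul_diag_sub (p : ι → ℝ) (C : ι → ι → ℝ) :
    ∑ i, ∑ j, p i * p j * (C i i - C i j)
      = (∑ i, ∑ j, p i * p j * (C i i - 2 * C i j + C j j)) / 2 := by
  have hswap : ∑ i, ∑ j, p i * p j * C j j = ∑ i, ∑ j, p i * p j * C i i := by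
    rw [Finset.sum_comm]
    simp only [mul_comm (p _) (p _)]
  simp only [mul_sub, mul_add, Finset.sum_sub_distrib, Finset.sum_add_distrib, hswap,
    mul_left_comm _ (2 : ℝ), ← Finset.mul_sum]
  ring

lemma mul_one_sub_sum_sq_le {p : ι → ℝ} (hp : ∀ i, 0 ≤ p i)
    (hsum : ∑ i, p i = 1) {d : ℝ} {D : ι → ι → ℝ} (hdiag : ∀ i, 0 ≤ D i i)
    (hD : Pairwise fun i j ↦ d ≤ D i j) :
    d * (1 - ∑ i, p i ^ 2) ≤ ∑ i, ∑ j, p i * p j * D i j := by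
  classical
  have hterm (i j : ι) :
      p i * p j * (d - if i = j then d else 0) ≤ p i * p j * D i j := by
    refine mul_le_mul_of_nonneg_left ?_ (mul_nonneg (hp i) (hp j))
    rcases eq_or_ne i j with rfl | hij
    · simpa using hdiag i
    · simpa [hij] using hD hij
  calc d * (1 - ∑ i, p i ^ 2) = ∑ i, ∑ j, p i * p j * (d - if i = j then d else 0) := by
        simp only [mul_sub, mul_ite, mul_zero, Finset.sum_sub_distrib, Finset.sum_ite_eq,
          Finset.mem_univ, if_true, ← Finset.sum_mul, ← Finset.mul_sum, hsum, sq]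
        ring
    _ ≤ ∑ i, ∑ j, p i * p j * D i j :=
        Finset.sum_le_sum fun i _ ↦ Finset.sum_le_sum fun j _ ↦ hterm i j

end Weights

section Sudakov

variable {Ω ι : Type*} [MeasurableSpace Ω] {μ : Measure Ω} {X : ι → Ω → ℝ}

lemma integrable_iSup [Finite ι] (hX : ∀ i, Integrable (X i) μ) :
    Integrable (fun ω ↦ ⨆ i, X i ω) μ := by
  cases isEmpty_or_nonempty ι
  · simp
  have := Fintype.ofFinite ι
  refine (integrable_finsetSum Finset.univ fun i _ ↦ (hX i).abs).mono'
    (AEMeasurable.iSup fun i ↦ (hX i).aemeasurable).aestronglyMeasurable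
    (ae_of_all _ fun ω ↦ ?_)
  obtain ⟨i, hi⟩ := exists_eq_ciSup_of_finite (f := fun i ↦ X i ω)
  rw [← hi, Real.norm_eq_abs]
  exact Finset.single_le_sum (f := fun i ↦ |X i ω|) (fun j _ ↦ abs_nonneg _) (Finset.mem_univ i)

variable [Fintype ι]

lemma integrable_mul_softmax [Nonempty ι] {f : Ω → ℝ} (hf : Integrable f μ)
    (hX : AEMeasurable (fun ω ↦ (X · ω)) μ) (i : ι) :
    Integrable (fun ω ↦ f ω * softmax (X · ω) i) μ := by
  refine hf.mul_bdd (c := 1)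
    ((measurable_softmax i).comp_aemeasurable hX).aestronglyMeasurable (ae_of_all _ fun ω ↦ ?_)
  rw [Real.norm_of_nonneg (softmax_nonneg _ i)]
  exact softmax_le_one _ i

lemma integrable_softmax [Nonempty ι] [IsFiniteMeasure μ] (hX : AEMeasurable (fun ω ↦ (X · ω)) μ)
    (i : ι) : Integrable (fun ω ↦ softmax (X · ω) i) μ := by
  simpa only [one_mul] using integrable_mul_softmax (integrable_const (1 : ℝ)) hX i

lemma integrable_softmax_mul_softmax [Nonempty ι] [IsFiniteMeasure μ]
    (hX : AEMeasurable (fun ω ↦ (X · ω)) μ) (i j : ι) :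
    Integrable (fun ω ↦ softmax (X · ω) i * softmax (X · ω) j) μ :=
  integrable_mul_softmax (integrable_softmax hX i) hX j

lemma integrable_one_sub_sum_softmax_sq [Nonempty ι] [IsFiniteMeasure μ]
    (hX : AEMeasurable (fun ω ↦ (X · ω)) μ) :
    Integrable (fun ω ↦ 1 - ∑ i, softmax (X · ω) i ^ 2) μ := by
  simp only [sq]
  exact (integrable_const 1).sub
    (integrable_finsetSum _ fun i _ ↦ integrable_softmax_mul_softmax hX i i)

lemma integral_sub_mul_softmax [Nonempty ι] (hX : HasGaussianLaw (fun ω ↦ (X · ω)) μ) (i : ι) :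
    ∫ ω, (X i ω - μ[X i]) * softmax (X · ω) i ∂μ = ∫ ω, ∑ j,
      softmax (X · ω) i * softmax (X · ω) j * (cov[X i, X i; μ] - cov[X i, X j; μ]) ∂μ := by
  have := hX.isProbabilityMeasure
  refine integral_sub_mul_of_hasLineDerivAt hX i (hasLineDerivAt_softmax · _ i)
    (measurable_softmax i) ?_
    (integrable_mul_softmax ((hX.eval i).integrable.sub (integrable_const _)) hX.aemeasurable i)
    (integrable_softmax hX.aemeasurable i)
    (integrable_finsetSum _ fun j _ ↦
      (integrable_softmax_mul_softmax hX.aemeasurable i j).mul_const _)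
  exact Finset.measurable_sum _ fun j _ ↦
    ((measurable_softmax i).mul (measurable_softmax j)).mul_const _

lemma integral_sum_sub_mul_softmax [Nonempty ι] (hX : HasGaussianLaw (fun ω ↦ (X · ω)) μ) :
    ∫ ω, ∑ i, (X i ω - μ[X i]) * softmax (X · ω) i ∂μ
      = (∫ ω, ∑ i, ∑ j, softmax (X · ω) i * softmax (X · ω) j
          * Var[fun ω ↦ X i ω - X j ω; μ] ∂μ) / 2 := by
  have := hX.isProbabilityMeasure
  have hvar (i j : ι) : Var[fun ω ↦ X i ω - X j ω; μ]
      = cov[X i, X i; μ] - 2 * cov[X i, X j; μ] + cov[X j, X j; μ] := by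
    rw [variance_fun_sub (hX.eval i).memLp_two (hX.eval j).memLp_two,
      covariance_self (hX.eval i).aemeasurable, covariance_self (hX.eval j).aemeasurable]
  have hterm (i : ι) : Integrable (fun ω ↦ (X i ω - μ[X i]) * softmax (X · ω) i) μ :=
    integrable_mul_softmax ((hX.eval i).integrable.sub (integrable_const _)) hX.aemeasurable i
  rw [integral_finsetSum _ fun i _ ↦ hterm i,
    Finset.sum_congr rfl fun i _ ↦ integral_sub_mul_softmax hX i,
    ← integral_finsetSum _ fun i _ ↦ integrable_finsetSum _ fun j _ ↦
      (integrable_softmax_mul_softmax hX.aemeasurable i j).mul_const _, ← integral_div]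
  simp only [hvar, sum_mul_diag_sub _ fun i j ↦ cov[X i, X j; μ]]

lemma mul_integral_one_sub_sum_softmax_sq_le_integral_iSup [Nonempty ι]
    (hX : HasGaussianLaw (fun ω ↦ (X · ω)) μ) (hmean : ∀ i, μ[X i] = 0) {d : ℝ}
    (hdist : Pairwise fun i j ↦ d ≤ Var[fun ω ↦ X i ω - X j ω; μ]) :
    d / 2 * ∫ ω, (1 - ∑ i, softmax (X · ω) i ^ 2) ∂μ ≤ ∫ ω, ⨆ i, X i ω ∂μ := by
  have := hX.isProbabilityMeasure
  calc d / 2 * ∫ ω, (1 - ∑ i, softmax (X · ω) i ^ 2) ∂μ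
      = (∫ ω, d * (1 - ∑ i, softmax (X · ω) i ^ 2) ∂μ) / 2 := by
        rw [integral_const_mul]
        ring
    _ ≤ (∫ ω, ∑ i, ∑ j, softmax (X · ω) i * softmax (X · ω) j
          * Var[fun ω ↦ X i ω - X j ω; μ] ∂μ) / 2 := by
        gcongr ?_ / 2
        exact integral_mono ((integrable_one_sub_sum_softmax_sq hX.aemeasurable).const_mul d)
          (integrable_finsetSum _ fun i _ ↦ integrable_finsetSum _ fun j _ ↦
            (integrable_softmax_mul_softmax hX.aemeasurable i j).mul_const _)
          fun ω ↦ mul_one_sub_sum_sq_le (softmax_nonneg _) (sum_softmax _)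
            (fun i ↦ variance_nonneg _ _) hdist
    _ = ∫ ω, ∑ i, X i ω * softmax (X · ω) i ∂μ := by
        rw [← integral_sum_sub_mul_softmax hX]
        simp only [hmean, sub_zero]
    _ ≤ ∫ ω, ⨆ i, X i ω ∂μ :=
        integral_mono
          (integrable_finsetSum _ fun i _ ↦
            integrable_mul_softmax (hX.eval i).integrable hX.aemeasurable i)
          (integrable_iSup fun i ↦ (hX.eval i).integrable) fun ω ↦ sum_mul_softmax_le_ciSup _

lemma le_integral_one_sub_sum_softmax_sq [Nontrivial ι]
    (hX : HasGaussianLaw (fun ω ↦ (X · ω)) μ) (hmean : ∀ i, μ[X i] = 0) :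
    (log (Fintype.card ι) - ∫ ω, ⨆ i, X i ω ∂μ) / (2 * log (Fintype.card ι))
      ≤ ∫ ω, (1 - ∑ i, softmax (X · ω) i ^ 2) ∂μ := by
  have := hX.isProbabilityMeasure
  have hX1 (i : ι) : Integrable (X i) μ := (hX.eval i).integrable
  have hsum : Integrable (fun ω ↦ ∑ i, X i ω) μ := integrable_finsetSum _ fun i _ ↦ hX1 i
  have hsup : Integrable (fun ω ↦ ⨆ i, X i ω) μ := integrable_iSup hX1
  have hshift : Integrable
      (fun ω ↦ log (Fintype.card ι) + (∑ i, X i ω) / Fintype.card ι) μ :=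
    (integrable_const _).add (hsum.div_const _)
  have hcentered : ∫ ω, ∑ i, X i ω ∂μ = 0 := by
    rw [integral_finsetSum _ fun i _ ↦ hX1 i, Finset.sum_eq_zero fun i _ ↦ hmean i]
  calc _ = ∫ ω, (log (Fintype.card ι) + (∑ i, X i ω) / Fintype.card ι - ⨆ i, X i ω)
          / (2 * log (Fintype.card ι)) ∂μ := by
        rw [integral_div, integral_sub hshift hsup,
          integral_add (integrable_const _) (hsum.div_const _), integral_div, hcentered]
        simp
    _ ≤ ∫ ω, (1 - ∑ i, softmax (X · ω) i ^ 2) ∂μ :=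
        integral_mono (by fun_prop) (integrable_one_sub_sum_softmax_sq hX.aemeasurable)
          fun ω ↦ le_one_sub_sum_softmax_sq _

lemma mul_log_card_sub_integral_iSup_le [Nontrivial ι]
    (hX : HasGaussianLaw (fun ω ↦ (X · ω)) μ) (hmean : ∀ i, μ[X i] = 0) {d : ℝ} (hd : 0 ≤ d)
    (hdist : Pairwise fun i j ↦ d ≤ Var[fun ω ↦ X i ω - X j ω; μ]) :
    d * (log (Fintype.card ι) - ∫ ω, ⨆ i, X i ω ∂μ)
      ≤ 4 * log (Fintype.card ι) * ∫ ω, ⨆ i, X i ω ∂μ := by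
  have hlog : 0 < log (Fintype.card ι) := log_pos (mod_cast Fintype.one_lt_card (α := ι))
  calc d * (log (Fintype.card ι) - ∫ ω, ⨆ i, X i ω ∂μ)
      = 4 * log (Fintype.card ι) * (d / 2 *
          ((log (Fintype.card ι) - ∫ ω, ⨆ i, X i ω ∂μ) / (2 * log (Fintype.card ι)))) := by
        field_simp
        ring
    _ ≤ 4 * log (Fintype.card ι) * (d / 2 * ∫ ω, (1 - ∑ i, softmax (X · ω) i ^ 2) ∂μ) := by
        gcongr
        exact le_integral_one_sub_sum_softmax_sq hX hmean
    _ ≤ 4 * log (Fintype.card ι) * ∫ ω, ⨆ i, X i ω ∂μ := by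
        gcongr
        exact mul_integral_one_sub_sum_softmax_sq_le_integral_iSup hX hmean hdist

lemma sudakov_minoration [Nonempty ι]
    (hX : HasGaussianLaw (fun ω ↦ (X · ω)) μ) (hmean : ∀ i, μ[X i] = 0) {δ : ℝ}
    (hdist : Pairwise fun i j ↦ δ ^ 2 ≤ Var[fun ω ↦ X i ω - X j ω; μ]) :
    δ * √(log (Fintype.card ι)) / 4 ≤ ∫ ω, ⨆ i, X i ω ∂μ := by
  have hX1 (i : ι) : Integrable (X i) μ := (hX.eval i).integrable
  rcases le_or_gt (δ * √(log (Fintype.card ι))) 0 with hneg | hpos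
  · obtain ⟨i⟩ := ‹Nonempty ι›
    refine (div_nonpos_of_nonpos_of_nonneg hneg zero_le_four).trans ((hmean i).ge.trans ?_)
    exact integral_mono (hX1 i) (integrable_iSup hX1) fun ω ↦
      le_ciSup (Finite.bddAbove_range (X · ω)) i
  have hδ : 0 < δ := pos_of_mul_pos_left hpos (sqrt_nonneg _)
  have hlog : 0 < log (Fintype.card ι) := sqrt_pos.1 (pos_of_mul_pos_right hpos hδ.le)
  -- Up to a constant factor, this is the scaling optimising the bound for `β * X`.
  let β := 2 * √(log (Fintype.card ι)) / δ
  have hβ : 0 ≤ β := by positivity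
  have : Nontrivial ι := Fintype.one_lt_card_iff_nontrivial.1 <| by
    exact_mod_cast (log_pos_iff (by positivity)).1 hlog
  have hcoef : β ^ 2 * δ ^ 2 = 4 * log (Fintype.card ι) := by
    rw [← mul_pow, div_mul_cancel₀ _ hδ.ne', mul_pow, sq_sqrt hlog.le]
    norm_num
  have hYdist : Pairwise fun i j ↦
      4 * log (Fintype.card ι) ≤ Var[fun ω ↦ β * X i ω - β * X j ω; μ] := by
    intro i j hij
    simp only [← hcoef, ← mul_sub, variance_const_mul]
    exact mul_le_mul_of_nonneg_left (hdist hij) (sq_nonneg β)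
  have hscaled := mul_log_card_sub_integral_iSup_le (X := fun i ω ↦ β * X i ω) (hX.fun_smul β)
    (fun i ↦ by rw [integral_const_mul, hmean, mul_zero]) (by positivity) hYdist
  simp only [← Real.mul_iSup_of_nonneg hβ, integral_const_mul] at hscaled
  have hlog_le : log (Fintype.card ι) ≤ 2 * (β * ∫ ω, ⨆ i, X i ω ∂μ) := by
    linarith [le_of_mul_le_mul_left hscaled (by positivity)]
  rw [div_le_iff₀ four_pos, ← le_div_iff₀' hδ]
  refine le_of_mul_le_mul_left ?_ (sqrt_pos.2 hlog)
  calc √(log (Fintype.card ι)) * √(log (Fintype.card ι))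
      = log (Fintype.card ι) := mul_self_sqrt hlog.le
    _ ≤ 2 * (β * ∫ ω, ⨆ i, X i ω ∂μ) := hlog_le
    _ = √(log (Fintype.card ι)) * ((∫ ω, ⨆ i, X i ω ∂μ) * 4 / δ) := by ring

end Sudakov

section GaussianProcess

variable {Ω : Type} [MeasurableSpace Ω] {μ : Measure Ω} {X : ℝ → Ω → ℝ} {S T : Set ℝ}

lemma IsCenteredGaussianOn.mono (hX : IsCenteredGaussianOn μ X S) (hTS : T ⊆ S) :
    IsCenteredGaussianOn μ X T :=
  ⟨fun t ht ↦ hX.1 t (hTS ht), fun k c ts hts ↦ hX.2 k c ts fun i ↦ hTS (hts i)⟩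

lemma IsCenteredGaussianOn.hasGaussianLaw (hX : IsCenteredGaussianOn μ X S) {k : ℕ}
    {ts : Fin k → ℝ} (hts : ∀ i, ts i ∈ S) : HasGaussianLaw (fun ω i ↦ X (ts i) ω) μ where
  isGaussian_map := by
    refine isGaussian_of_map_eq_gaussianReal fun L ↦ ?_
    obtain ⟨v, hv⟩ := hX.2 k (fun i ↦ L (Pi.single i 1)) ts hts
    refine ⟨0, v, ?_⟩
    rw [Measure.map_map (by fun_prop) (measurable_pi_lambda _ fun i ↦ hX.1 _ (hts i)), ← hv]
    congr 1 with ω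
    rw [Function.comp_apply, pi_eq_sum_univ' (fun i ↦ X (ts i) ω), map_sum]
    exact Finset.sum_congr rfl fun i _ ↦ by rw [map_smul, smul_eq_mul, mul_comm]

lemma IsCenteredGaussianOn.integrable (hX : IsCenteredGaussianOn μ X S) {t : ℝ} (ht : t ∈ S) :
    Integrable (X t) μ :=
  ((hX.hasGaussianLaw (k := 1) (ts := fun _ ↦ t) fun _ ↦ ht).eval 0).integrable

lemma IsCenteredGaussianOn.memLp_two (hX : IsCenteredGaussianOn μ X S) {t : ℝ} (ht : t ∈ S) :
    MemLp (X t) 2 μ :=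
  ((hX.hasGaussianLaw (k := 1) (ts := fun _ ↦ t) fun _ ↦ ht).eval 0).memLp_two

lemma IsCenteredGaussianOn.integral_eq_zero (hX : IsCenteredGaussianOn μ X S) {t : ℝ}
    (ht : t ∈ S) : ∫ ω, X t ω ∂μ = 0 := by
  obtain ⟨v, hv⟩ := hX.2 1 (fun _ ↦ 1) (fun _ ↦ t) fun _ ↦ ht
  simp only [Finset.univ_unique, one_mul, Finset.sum_const, Finset.card_singleton, one_smul] at hv
  rw [← integral_map (f := fun x ↦ x) (hX.1 t ht).aemeasurable aestronglyMeasurable_id, hv,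
    integral_id_gaussianReal]

lemma IsCenteredGaussianOn.variance_sub (hX : IsCenteredGaussianOn μ X S) {s t : ℝ}
    (hs : s ∈ S) (ht : t ∈ S) :
    Var[fun ω ↦ X t ω - X s ω; μ] = l2norm μ (fun ω ↦ X t ω - X s ω) ^ 2 := by
  rw [l2norm, sq_sqrt (integral_nonneg fun ω ↦ sq_nonneg _)]
  refine variance_of_integral_eq_zero ((hX.1 t ht).sub (hX.1 s hs)).aemeasurable ?_
  rw [integral_sub (hX.integrable ht) (hX.integrable hs), hX.integral_eq_zero ht,
    hX.integral_eq_zero hs, sub_self]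

lemma IsCenteredGaussianOn.sudakov_minoration (hX : IsCenteredGaussianOn μ X S) {k : ℕ}
    [NeZero k] {ts : Fin k → ℝ} (hts : ∀ i, ts i ∈ S) {δ : ℝ} (hδ : 0 ≤ δ)
    (hdist : Pairwise fun i j ↦ δ ≤ l2norm μ fun ω ↦ X (ts i) ω - X (ts j) ω) :
    δ * √(log k) / 4 ≤ ∫ ω, ⨆ i, X (ts i) ω ∂μ := by
  have h := _root_.sudakov_minoration (δ := δ) (hX.hasGaussianLaw hts)
    (fun i ↦ hX.integral_eq_zero (hts i)) fun i j hij ↦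
      (pow_le_pow_left₀ hδ (hdist hij) 2).trans_eq (hX.variance_sub (hts j) (hts i)).symm
  rwa [Fintype.card_fin] at h

lemma le_abs_natCast_mul_sub {i j : ℕ} (hij : i ≠ j) {δ : ℝ} (hδ : 0 ≤ δ) :
    δ ≤ |i * δ - j * δ| := by
  have hone : (1 : ℤ) ≤ |(i : ℤ) - j| := Int.one_le_abs (sub_ne_zero.2 (mod_cast hij))
  rw [← sub_mul, abs_mul, abs_of_nonneg hδ]
  exact le_mul_of_one_le_left hδ (mod_cast hone)

lemma IsCenteredGaussianOn.sudakov_minoration_grid (hX : IsCenteredGaussianOn μ X (Icc 0 1))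
    {H : ℝ} (hH : 0 ≤ H)
    (hincr : ∀ s ∈ Icc (0 : ℝ) 1, ∀ t ∈ Icc (0 : ℝ) 1,
      |t - s| ^ H ≤ l2norm μ fun ω ↦ X t ω - X s ω)
    {n p q : ℕ} (hpq : p * q ≤ n) :
    ((q : ℝ) / n) ^ H * √(log (p + 1)) / 4 ≤ expMaxGrid μ X n := by
  have hfine (i : Fin (n + 1)) : ((i : ℕ) : ℝ) / n ∈ Icc (0 : ℝ) 1 :=
    ⟨by positivity, div_le_one_of_le₀ (mod_cast i.is_le) n.cast_nonneg⟩
  have hindex (k : Fin (p + 1)) : (k : ℕ) * q < n + 1 :=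
    Nat.lt_succ_of_le ((Nat.mul_le_mul_right q k.is_le).trans hpq)
  let coarse (k : Fin (p + 1)) : Fin (n + 1) := ⟨k * q, hindex k⟩
  have hcoarse (k : Fin (p + 1)) : (((coarse k : ℕ) : ℝ) / n) ∈ Icc (0 : ℝ) 1 := hfine (coarse k)
  have hgap (i j : Fin (p + 1)) (hij : i ≠ j) :
      (q : ℝ) / n ≤ |((coarse i : ℕ) : ℝ) / n - ((coarse j : ℕ) : ℝ) / n| := by
    simpa only [coarse, Nat.cast_mul, mul_div_assoc]
      using le_abs_natCast_mul_sub (Fin.val_ne_of_ne hij) (by positivity : (0 : ℝ) ≤ (q : ℝ) / n)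
  have hsudakov := hX.sudakov_minoration hcoarse (by positivity : (0 : ℝ) ≤ ((q : ℝ) / n) ^ H)
    fun i j hij ↦ (rpow_le_rpow (by positivity) (hgap i j hij) hH).trans
      (hincr _ (hcoarse j) _ (hcoarse i))
  rw [Nat.cast_add_one] at hsudakov
  refine hsudakov.trans (integral_mono (integrable_iSup fun k ↦ hX.integrable (hcoarse k))
    (integrable_iSup fun i ↦ hX.integrable (hfine i)) fun ω ↦ ciSup_le fun k ↦ ?_)
  exact le_ciSup (Finite.bddAbove_range fun i : Fin (n + 1) ↦ X (((i : ℕ) : ℝ) / n) ω) (coarse k)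

lemma IsFBM.l2norm_sub {H : ℝ} (hH : 0 < H) (hX : IsFBM μ H X) {s t : ℝ} (hs : 0 ≤ s)
    (ht : 0 ≤ t) : l2norm μ (fun ω ↦ X t ω - X s ω) = |t - s| ^ H := by
  have hcov := hX.2.2.2
  have hsq {u : ℝ} (hu : 0 ≤ u) : ∫ ω, X u ω * X u ω ∂μ = u ^ (2 * H) := by
    rw [hcov u u hu hu, sub_self, abs_zero, zero_rpow (by positivity)]
    ring
  have hint {u v : ℝ} (hu : 0 ≤ u) (hv : 0 ≤ v) : Integrable (fun ω ↦ X u ω * X v ω) μ :=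
    (hX.1.memLp_two hu).integrable_mul (hX.1.memLp_two hv)
  have hexpand : ∫ ω, (X t ω - X s ω) ^ 2 ∂μ = |t - s| ^ (2 * H) := by
    calc ∫ ω, (X t ω - X s ω) ^ 2 ∂μ
        = ∫ ω, (X t ω * X t ω + X s ω * X s ω - 2 * (X s ω * X t ω)) ∂μ := by
          congr 1 with ω
          ring
      _ = ∫ ω, X t ω * X t ω ∂μ + ∫ ω, X s ω * X s ω ∂μ - 2 * ∫ ω, X s ω * X t ω ∂μ := by
          rw [integral_sub (by fun_prop) ((hint hs ht).const_mul 2),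
            integral_add (hint ht ht) (hint hs hs), integral_const_mul]
      _ = |t - s| ^ (2 * H) := by
          rw [hsq ht, hsq hs, hcov s t hs ht]
          ring
  rw [l2norm, hexpand, mul_comm, rpow_mul (abs_nonneg _), rpow_two, sqrt_sq (by positivity)]

end GaussianProcess

lemma one_div_two_mul_le_div_floor_div {r : ℝ} (hr : 1 ≤ r) {n : ℕ} (hn : r ≤ n) :
    1 / (2 * r) ≤ ((n / ⌊r⌋₊ : ℕ) : ℝ) / n := by
  have hfloor : (⌊r⌋₊ : ℝ) ≤ r := Nat.floor_le (by positivity)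
  have hpos : 0 < ⌊r⌋₊ := Nat.floor_pos.2 hr
  have hq : 1 ≤ n / ⌊r⌋₊ := Nat.div_pos (mod_cast hfloor.trans hn) hpos
  have hnq : n ≤ 2 * (⌊r⌋₊ * (n / ⌊r⌋₊)) := by nlinarith [Nat.lt_mul_div_succ n hpos]
  rw [div_le_div_iff₀ (by positivity) (by linarith), one_mul]
  calc (n : ℝ) ≤ 2 * (⌊r⌋₊ * (n / ⌊r⌋₊ : ℕ)) := mod_cast hnq
    _ ≤ 2 * (r * (n / ⌊r⌋₊ : ℕ)) := by gcongr
    _ = (n / ⌊r⌋₊ : ℕ) * (2 * r) := by ring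

lemma exists_coarse_grid {H : ℝ} (hH : 0 < H) {n : ℕ} (hn : (2 : ℝ) ^ (1 / (2 * H)) ≤ n) :
    ∃ p q : ℕ, p * q ≤ n ∧ log 2 / (2 * H) ≤ log (p + 1) ∧ 1 / 2 ≤ ((q : ℝ) / n) ^ H := by
  set r : ℝ := 2 ^ (1 / (2 * H)) with hr
  have hr1 : 1 ≤ r := one_le_rpow one_le_two (by positivity)
  have hpr : (⌊r⌋₊ : ℝ) ≤ r := Nat.floor_le (by positivity)
  have hp : 0 < ⌊r⌋₊ := Nat.floor_pos.2 hr1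
  have hn0 : (0 : ℝ) < n := by linarith
  refine ⟨⌊r⌋₊, n / ⌊r⌋₊, Nat.mul_div_le n _, ?_, ?_⟩
  · calc log 2 / (2 * H) = log r := by rw [hr, log_rpow two_pos]; ring
      _ ≤ log (⌊r⌋₊ + 1) := log_le_log (by positivity) (Nat.lt_floor_add_one r).le
  rcases (Nat.succ_le_of_lt hp).eq_or_lt with hp1 | hp2
  · rw [← hp1, Nat.succ_eq_add_one, zero_add, Nat.div_one, div_self hn0.ne', one_rpow]
    norm_num
  have hr2 : 2 ≤ r := (Nat.ofNat_le_cast.2 hp2).trans hpr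
  have hH2 : H ≤ 1 / 2 := by
    have hone_le : 1 ≤ 1 / (2 * H) :=
      (rpow_le_rpow_left_iff one_lt_two).1 ((rpow_one (2 : ℝ)).trans_le hr2)
    rw [le_div_iff₀ (by positivity)] at hone_le
    linarith
  calc (1 : ℝ) / 2 = 2 ^ (-(1 / 2) - 1 / 2 : ℝ) := by norm_num [rpow_neg_one]
    _ ≤ 2 ^ (-H - 1 / 2) := rpow_le_rpow_of_exponent_le one_le_two (by linarith)
    _ = (1 / (2 * r)) ^ H := by
      have hexponent : -H - 1 / 2 = (1 + 1 / (2 * H)) * -H := by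
        field_simp
        ring
      rw [hexponent, rpow_mul two_pos.le, rpow_one_add' two_pos.le (by positivity), ← hr,
        rpow_neg (by positivity), ← inv_rpow (by positivity), one_div]
    _ ≤ (((n / ⌊r⌋₊ : ℕ) : ℝ) / n) ^ H :=
      rpow_le_rpow (by positivity) (one_div_two_mul_le_div_floor_div hr1 hn) hH.le

lemma two_rpow_one_div_two_mul_le {H : ℝ} (hH : 0 < H) :
    (2 : ℝ) ^ (1 / (2 * H)) ≤ 2 ^ (1 / H) :=
  rpow_le_rpow_of_exponent_le one_le_two (one_div_le_one_div_of_le hH (by linarith))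

lemma const_div_sqrt_sub_le_sqrt_log_two_div {H : ℝ} (hH : 0 < H) :
    (2 * π * log 2) ^ (-(1 : ℝ) / 2) / ((6 + (2 * π * log 2) ^ (-(1 : ℝ) / 2)) * 5 * √H) - 0.0107
      ≤ √(log 2 / (2 * H)) / 8 := by
  have hlog : 1 / 2 ≤ log 2 := by linarith [log_two_gt_d9]
  have hbase : 1 ≤ 2 * π * log 2 := by nlinarith [pi_gt_three]
  set c := (2 * π * log 2) ^ (-(1 : ℝ) / 2)
  have hc0 : 0 < c := rpow_pos_of_pos (by linarith) _
  have hc1 : c ≤ 1 := rpow_le_one_of_one_le_of_nonpos hbase (by norm_num)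
  calc c / ((6 + c) * 5 * √H) - 0.0107 ≤ c / ((6 + c) * 5 * √H) := by linarith
    _ = c / ((6 + c) * 5) / √H := (div_div _ _ _).symm
    _ ≤ 1 / 2 / 8 / √H := by
      gcongr ?_ / √H
      rw [div_le_iff₀ (by linarith only [hc0])]
      linarith
    _ = √((1 / 2) ^ 2 / H) / 8 := by
      rw [sqrt_div (by positivity), sqrt_sq (by positivity)]
      ring
    _ ≤ √(log 2 / 2 / H) / 8 := by
      gcongr √(?_ / H) / 8
      linarith
    _ = √(log 2 / (2 * H)) / 8 := by rw [div_div]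

theorem stmt18_general {Ω : Type} [MeasurableSpace Ω] {μ : Measure Ω} {H : ℝ} (hH : 0 < H)
    {B : ℝ → Ω → ℝ} (hB : IsCenteredGaussianOn μ B (Icc 0 1))
    (hincr : ∀ s ∈ Icc (0 : ℝ) 1, ∀ t ∈ Icc (0 : ℝ) 1,
      |t - s| ^ H ≤ l2norm μ fun ω ↦ B t ω - B s ω)
    {n : ℕ} (hn : (2 : ℝ) ^ (1 / (2 * H)) ≤ n) :
    √(log 2 / (2 * H)) / 8 ≤ expMaxGrid μ B n := by
  obtain ⟨p, q, hpq, hlog, hmesh⟩ := exists_coarse_grid hH hn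
  calc √(log 2 / (2 * H)) / 8 = 1 / 2 * √(log 2 / (2 * H)) / 4 := by ring
    _ ≤ ((q : ℝ) / n) ^ H * √(log (p + 1)) / 4 := by gcongr
    _ ≤ expMaxGrid μ B n := hB.sudakov_minoration_grid hH.le hincr hpq

/-- for `n ≥ 2^{1/H}` and `c₂ = (2π ln 2)^{-1/2}`,
`f(H,n) ≥ c₂/((6+c₂)·5·√H) - 0.0107`. -/
theorem stmt18 {Ω : Type} [MeasurableSpace Ω] (μ : Measure Ω) [IsProbabilityMeasure μ]
    (H : ℝ) (hH : H ∈ Ioo (0:ℝ) 1) (B : ℝ → Ω → ℝ) (hB : IsFBM μ H B)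
    (n : ℕ) (hn : (2:ℝ) ^ (1 / H) ≤ (n : ℝ)) :
    (2 * π * Real.log 2) ^ (-(1:ℝ)/2) /
        ((6 + (2 * π * Real.log 2) ^ (-(1:ℝ)/2)) * 5 * Real.sqrt H) - 0.0107 ≤
      expMaxGrid μ B n :=
  (const_div_sqrt_sub_le_sqrt_log_two_div hH.1).trans <| stmt18_general hH.1
    (hB.1.mono Icc_subset_Ici_self) (fun _ hs _ ht ↦ (hB.l2norm_sub hH.1 hs.1 ht.1).ge)
    ((two_rpow_one_div_two_mul_le hH.1).trans hn)
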